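/- arXiv:2504.19054 — 3 statements merged into one kernel-verified Lean document; each statement's English description precedes it below -/
import Mathlib

section
/- Let L be an n×n invertible SDDM matrix with integer entries in [−U, U] for some integer U ≥ 1, and let i, j ∈ [n] with i ≠ j and L_{ij} ≠ 0. Then L^{-1}e^{(i)} ≤ nU · L^{-1}e^{(j)} entrywise, i.e., for every k ∈ [n], (L^{-1})_{ki} ≤ nU · (L^{-1})_{kj}. -/
/-!
The inverse of an invertible L-matrix with nonnegative row sums is entrywise nonnegative, by a
minimum principle. Suppose `L *ᵥ x ≥ 0` and `x` attains a negative minimum on the set `S`. Each row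
of `L` indexed by `S` then vanishes off `S`, and `L *ᵥ x` vanishes on `S`. So `L` is block
triangular with respect to `S`, hence so is `L⁻¹`, and `x = L⁻¹ *ᵥ (L *ᵥ x)` vanishes on `S`, a
contradiction.

Hence in the entry `(k, j)` of `L⁻¹ * L = 1` all terms but those of `i` and `j` are nonpositive, so
that `0 ≤ L⁻¹ k i * L i j + L⁻¹ k j * L j j`. A nonzero integer entry `L i j` is at most `-1`.
-/

open Matrix

/-- A matrix `M` is an RDDL matrix (row diagonally dominant L-matrix). -/
def IsRDDL {n : ℕ} (M : Matrix (Fin n) (Fin n) ℝ) : Prop :=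
  (∀ i, 0 < M i i) ∧ (∀ i j, i ≠ j → M i j ≤ 0) ∧
    (∀ i, ∑ j ∈ Finset.univ.erase i, |M i j| ≤ M i i)

section Ring

variable {ι R : Type*} [Ring R]

lemma dotProduct_eq_sum_mul_sub_add [Fintype ι] (a x : ι → R) (c : R) :
    a ⬝ᵥ x = ∑ s, a s * (x s - c) + (∑ s, a s) * c := by
  simp only [dotProduct, mul_sub, Finset.sum_sub_distrib, Finset.sum_mul, sub_add_cancel]

variable [LinearOrder R] [IsStrictOrderedRing R]

lemma le_natCast_mul_of_abs_intCast_le {n U : ℕ} (hn : 0 < n) {a : R}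
    (ha : ∃ z : ℤ, a = z ∧ |z| ≤ (U : ℤ)) : a ≤ n * U := by
  obtain ⟨z, rfl, hz⟩ := ha
  calc (z : R) ≤ U := by exact_mod_cast (le_abs_self z).trans hz
    _ ≤ n * U := le_mul_of_one_le_left U.cast_nonneg (Nat.one_le_cast.2 hn)

lemma dotProduct_le_mul_sub_of_forall_le [Fintype ι] {a x : ι → R} {p : ι} (hoff : ∀ s ≠ p, a s ≤ 0)
    (hsum : 0 ≤ ∑ s, a s) (hmin : ∀ s, x p ≤ x s) (hp : x p ≤ 0) (s : ι) :
    a ⬝ᵥ x ≤ a s * (x s - x p) := by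
  have hterm (t : ι) : a t * (x t - x p) ≤ 0 := by
    obtain rfl | ht := eq_or_ne t p
    · simp
    · exact mul_nonpos_of_nonpos_of_nonneg (hoff t ht) (sub_nonneg.2 (hmin t))
  calc a ⬝ᵥ x = ∑ t, a t * (x t - x p) + (∑ t, a t) * x p := dotProduct_eq_sum_mul_sub_add a x _
    _ ≤ ∑ t, a t * (x t - x p) :=
      add_le_of_nonpos_right (mul_nonpos_of_nonneg_of_nonpos hsum hp)
    _ ≤ ∑ t ∈ {s}, a t * (x t - x p) :=
      Finset.sum_le_sum_of_subset_of_nonpos' (Finset.subset_univ _) fun t _ _ ↦ hterm t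
    _ = a s * (x s - x p) := Finset.sum_singleton _ s

end Ring

section CommRing

variable {ι R : Type*} [Fintype ι] [DecidableEq ι] [CommRing R]

lemma inv_apply_eq_zero_of_mem_of_notMem {M : Matrix ι ι R} (hM : IsUnit M)
    {S : Set ι} (hS : ∀ r ∈ S, ∀ s ∉ S, M r s = 0) {r s : ι} (hr : r ∈ S) (hs : s ∉ S) :
    M⁻¹ r s = 0 := by
  let := hM.invertible
  have htri : M.BlockTriangular (· ∈ S) := fun p q hpq ↦
    have ⟨hp, hq⟩ : p ∈ S ∧ q ∉ S := Classical.not_imp.1 hpq.not_ge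
    hS p hp q hq
  exact blockTriangular_inv_of_blockTriangular htri (by simp [hr, hs, lt_iff_le_not_ge])

variable [LinearOrder R] [IsStrictOrderedRing R] {L : Matrix ι ι R}

lemma nonneg_of_mulVec_nonneg (hoff : ∀ i j, i ≠ j → L i j ≤ 0) (hrow : ∀ i, 0 ≤ ∑ j, L i j)
    (hInv : IsUnit L) {x : ι → R} (hx : 0 ≤ L *ᵥ x) : 0 ≤ x := by
  by_contra hneg
  obtain ⟨r, hr⟩ : ∃ r, x r < 0 := by simpa [Pi.le_def] using hneg
  obtain ⟨p, -, hmin⟩ := Finset.exists_min_image Finset.univ x ⟨r, Finset.mem_univ r⟩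
  replace hmin (s : ι) : x p ≤ x s := hmin s (Finset.mem_univ s)
  have hp : x p < 0 := (hmin r).trans_lt hr
  set S : Set ι := {q | x q = x p}
  have hle (q : ι) (hq : q ∈ S) (s : ι) : (L *ᵥ x) q ≤ L q s * (x s - x q) :=
    dotProduct_le_mul_sub_of_forall_le (fun s hs ↦ hoff q s hs.symm) (hrow q)
      (fun t ↦ hq.trans_le (hmin t)) (hq.trans_le hp.le) s
  have hzero (q : ι) (hq : q ∈ S) : (L *ᵥ x) q = 0 :=
    le_antisymm (by simpa using hle q hq q) (hx q)
  have hblock (q : ι) (hq : q ∈ S) (s : ι) (hs : s ∉ S) : L q s = 0 := by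
    have hlt : x q < x s := hq.trans_lt ((hmin s).lt_of_ne' hs)
    have hqs : L q s ≤ 0 := hoff q s (ne_of_apply_ne x hlt.ne)
    exact hqs.antisymm (nonneg_of_mul_nonneg_left ((hx q).trans (hle q hq s)) (sub_pos.2 hlt))
  refine hp.ne ?_
  calc x p = (L⁻¹ *ᵥ (L *ᵥ x)) p := by
        rw [mulVec_mulVec, nonsing_inv_mul L ((isUnit_iff_isUnit_det L).1 hInv), one_mulVec]
    _ = ∑ s, L⁻¹ p s * (L *ᵥ x) s := rfl
    _ = 0 := Finset.sum_eq_zero fun s _ ↦ by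
      by_cases hs : s ∈ S
      · rw [hzero s hs, mul_zero]
      · rw [inv_apply_eq_zero_of_mem_of_notMem hInv hblock rfl hs, zero_mul]

lemma inv_apply_nonneg (hoff : ∀ i j, i ≠ j → L i j ≤ 0) (hrow : ∀ i, 0 ≤ ∑ j, L i j)
    (hInv : IsUnit L) (k i : ι) : 0 ≤ L⁻¹ k i := by
  have hcol : L *ᵥ L⁻¹.col i = Pi.single i 1 := by
    rw [← mulVec_single_one, mulVec_mulVec,
      mul_nonsing_inv L ((isUnit_iff_isUnit_det L).1 hInv), one_mulVec]
  exact nonneg_of_mulVec_nonneg hoff hrow hInv (hcol ▸ Pi.single_nonneg.2 zero_le_one) k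

lemma inv_apply_mul_neg_le_inv_apply_mul_diag (hoff : ∀ i j, i ≠ j → L i j ≤ 0)
    (hrow : ∀ i, 0 ≤ ∑ j, L i j) (hInv : IsUnit L) {i j : ι} (hij : i ≠ j) (k : ι) :
    L⁻¹ k i * -L i j ≤ L⁻¹ k j * L j j := by
  have hsum : 0 ≤ L⁻¹ k i * L i j + L⁻¹ k j * L j j := calc
    0 ≤ (1 : Matrix ι ι R) k j := by rw [one_apply]; split_ifs <;> simp
    _ = ∑ s, L⁻¹ k s * L s j := by
      rw [← nonsing_inv_mul L ((isUnit_iff_isUnit_det L).1 hInv), mul_apply]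
    _ ≤ ∑ s ∈ {i, j}, L⁻¹ k s * L s j := by
      refine Finset.sum_le_sum_of_subset_of_nonpos' (Finset.subset_univ _) fun s _ hs ↦ ?_
      have hsj : s ≠ j := fun h ↦ hs (by simp [h])
      exact mul_nonpos_of_nonneg_of_nonpos (inv_apply_nonneg hoff hrow hInv k s) (hoff s j hsj)
    _ = L⁻¹ k i * L i j + L⁻¹ k j * L j j := Finset.sum_pair hij
  linarith

theorem inverse_columns_of_neighbors_general (hoff : ∀ i j, i ≠ j → L i j ≤ 0)
    (hrow : ∀ i, 0 ≤ ∑ j, L i j) (hInv : IsUnit L) {i j : ι} (hij : i ≠ j)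
    (hint : ∃ z : ℤ, L i j = z) (hLij : L i j ≠ 0) {c : R} (hc : L j j ≤ c) (k : ι) :
    L⁻¹ k i ≤ c * L⁻¹ k j := by
  have hentry : 1 ≤ -L i j := by
    obtain ⟨z, hz⟩ := hint
    have hneg : L i j < 0 := (hoff i j hij).lt_of_ne hLij
    rw [hz] at hneg ⊢
    exact le_neg_of_le_neg (Int.cast_le_neg_one_of_neg (Int.cast_lt_zero.1 hneg))
  have hnonneg := inv_apply_nonneg hoff hrow hInv k
  calc L⁻¹ k i ≤ L⁻¹ k i * -L i j := le_mul_of_one_le_right (hnonneg i) hentry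
    _ ≤ L⁻¹ k j * L j j := inv_apply_mul_neg_le_inv_apply_mul_diag hoff hrow hInv hij k
    _ ≤ L⁻¹ k j * c := mul_le_mul_of_nonneg_left hc (hnonneg j)
    _ = c * L⁻¹ k j := mul_comm _ _

end CommRing

lemma IsRDDL.sum_row_nonneg {n : ℕ} {M : Matrix (Fin n) (Fin n) ℝ} (hM : IsRDDL M) (i : Fin n) :
    0 ≤ ∑ j, M i j := by
  obtain ⟨-, hoff, hdom⟩ := hM
  have habs : ∑ j ∈ Finset.univ.erase i, |M i j| = -∑ j ∈ Finset.univ.erase i, M i j := by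
    rw [← Finset.sum_neg_distrib]
    exact Finset.sum_congr rfl fun j hj ↦ abs_of_nonpos (hoff i j (Finset.ne_of_mem_erase hj).symm)
  rw [← Finset.add_sum_erase _ _ (Finset.mem_univ i)]
  linarith [hdom i]

/-- For an invertible SDDM matrix `L` (symmetric invertible RDDL) with integer entries in
`[-U, U]` and neighbouring indices `i ≠ j` (i.e. `L i j ≠ 0`), the columns of the inverse
satisfy `L⁻¹ e⁽ⁱ⁾ ≤ n·U · L⁻¹ e⁽ʲ⁾` entrywise. -/
theorem inverse_columns_of_neighbors {n : ℕ} (U : ℕ) (hU : 1 ≤ U)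
    (L : Matrix (Fin n) (Fin n) ℝ) (hL : IsRDDL L) (hSym : L.IsSymm) (hInv : IsUnit L)
    (hint : ∀ i j, ∃ z : ℤ, L i j = (z : ℝ) ∧ |z| ≤ (U : ℤ))
    (i j : Fin n) (hij : i ≠ j) (hLij : L i j ≠ 0) :
    ∀ k, L⁻¹ k i ≤ (n : ℝ) * U * L⁻¹ k j :=
  inverse_columns_of_neighbors_general hL.2.1 hL.sum_row_nonneg hInv hij
    ((hint i j).imp fun _ ↦ And.left) hLij
    (le_natCast_mul_of_abs_intCast_le j.pos (hint j j))
end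

section
/- Let L be an n×n invertible SDDM matrix with integer entries in [−U, U] for some integer U ≥ 1, let b ∈ ℝ^n be a nonnegative vector, and let i, j ∈ [n] with i ≠ j and L_{ij} ≠ 0. Then (nU)^{-1}·(L^{-1}b)_j ≤ (L^{-1}b)_i ≤ nU·(L^{-1}b)_j. -/
open Matrix

/-!
If `L` has nonpositive off-diagonal entries and `x = L⁻¹ b` is nonnegative, then row `i` of
`L x = b ≥ 0` gives `|L i j| * x j ≤ L i i * x i` as soon as the other off-diagonal terms are
dropped; integrality bounds the ratio `L i i / |L i j|`.

Nonnegativity of `x` is a minimum principle. Diagonal dominance says `L 1 ≥ 0`, and adding a large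
multiple of `1` to `L⁻¹ 1` produces `u > 0` with `L u > 0` strictly. If `x p / u p` were the
minimal ratio and negative, then `x - (x p / u p) u` would be nonnegative and vanish at `p`,
although its image under `L` is positive at `p`, which the signs of the entries of `L` forbid.
-/

/-- A square matrix is a Z-matrix if its off-diagonal entries are nonpositive. This is the sign
condition behind the minimum principle; the diagonal is unrestricted. -/
def IsZMatrix {ι R : Type*} [Zero R] [LE R] (L : Matrix ι ι R) : Prop :=
  ∀ ⦃i j⦄, i ≠ j → L i j ≤ 0

namespace IsZMatrix

variable {ι : Type*} [Fintype ι]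

section OrderedRing

variable {R : Type*} [Ring R] [PartialOrder R] [IsOrderedRing R] {L : Matrix ι ι R} {x : ι → R}
  {i j : ι}

theorem mulVec_apply_le_sum (hL : IsZMatrix L) (hx : 0 ≤ x) {s : Finset ι} (hi : i ∈ s) :
    (L *ᵥ x) i ≤ ∑ k ∈ s, L i k * x k :=
  Finset.sum_le_sum_of_subset_of_nonpos' s.subset_univ fun k _ hk =>
    mul_nonpos_of_nonpos_of_nonneg (hL (ne_of_mem_of_not_mem hi hk)) (hx k)

theorem mulVec_apply_nonpos (hL : IsZMatrix L) (hx : 0 ≤ x) (hxi : x i = 0) :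
    (L *ᵥ x) i ≤ 0 := by
  simpa [hxi] using hL.mulVec_apply_le_sum hx (Finset.mem_singleton_self i)

theorem neg_mul_le_diag_mul (hL : IsZMatrix L) (hx : 0 ≤ x) (hLx : 0 ≤ (L *ᵥ x) i)
    (hij : i ≠ j) : -L i j * x j ≤ L i i * x i := by
  classical
  have hrow : 0 ≤ L i i * x i + L i j * x j := by
    simpa [Finset.sum_pair hij] using
      hLx.trans (hL.mulVec_apply_le_sum hx (Finset.mem_insert_self i {j}))
  rwa [neg_mul, neg_le_iff_add_nonneg]

end OrderedRing

variable {K : Type*} [Field K] [LinearOrder K] [IsStrictOrderedRing K] {L : Matrix ι ι K}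

theorem nonneg_of_mulVec_nonneg_of_pos (hL : IsZMatrix L) {u : ι → K} (hu : ∀ i, 0 < u i)
    (hLu : ∀ i, 0 < (L *ᵥ u) i) {x : ι → K} (hLx : 0 ≤ L *ᵥ x) : 0 ≤ x := by
  intro i
  have : Nonempty ι := ⟨i⟩
  obtain ⟨p, hp⟩ := Finite.exists_min fun k => x k / u k
  set c := x p / u p
  have hcx : c • u ≤ x := fun k => (le_div_iff₀ (hu k)).1 (hp k)
  have hxp : (x - c • u) p = 0 := by simp [c, (hu p).ne']
  have hLp : (L *ᵥ x) p ≤ c * (L *ᵥ u) p := by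
    simpa [mulVec_sub, mulVec_smul] using hL.mulVec_apply_nonpos (sub_nonneg.2 hcx) hxp
  have hc : 0 ≤ c := nonneg_of_mul_nonneg_left ((hLx p).trans hLp) (hLu p)
  exact (mul_nonneg hc (hu i).le).trans (hcx i)

end IsZMatrix

section

variable {ι K : Type*} [Fintype ι] [DecidableEq ι] [Field K] [LinearOrder K]
  [IsStrictOrderedRing K] {L : Matrix ι ι K} {v b : ι → K}

theorem exists_pos_mulVec_pos_of_isUnit (hInv : IsUnit L) (hv : ∀ i, 0 < v i)
    (hLv : 0 ≤ L *ᵥ v) : ∃ u : ι → K, (∀ i, 0 < u i) ∧ ∀ i, 0 < (L *ᵥ u) i := by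
  obtain ⟨w, hw⟩ := mulVec_surjective_iff_isUnit.2 hInv 1
  obtain ⟨s, hs, hsw⟩ := ((Filter.eventually_ge_atTop 0).and <|
    Filter.eventually_all.2 fun k => Filter.eventually_gt_atTop (-w k / v k)).exists
  refine ⟨s • v + w, fun k => ?_, fun k => ?_⟩
  · exact neg_lt_iff_pos_add.1 ((div_lt_iff₀ (hv k)).1 (hsw k))
  · rw [mulVec_add, mulVec_smul, hw]
    exact add_pos_of_nonneg_of_pos (mul_nonneg hs (hLv k)) one_pos

theorem IsZMatrix.nonneg_of_mulVec_nonneg_of_isUnit (hL : IsZMatrix L) (hInv : IsUnit L)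
    (hv : ∀ i, 0 < v i) (hLv : 0 ≤ L *ᵥ v) {x : ι → K} (hLx : 0 ≤ L *ᵥ x) : 0 ≤ x := by
  obtain ⟨u, hu, hLu⟩ := exists_pos_mulVec_pos_of_isUnit hInv hv hLv
  exact hL.nonneg_of_mulVec_nonneg_of_pos hu hLu hLx

theorem solution_of_neighbors_single_system_general (hL : IsZMatrix L) (hInv : IsUnit L)
    (hv : ∀ i, 0 < v i) (hLv : 0 ≤ L *ᵥ v) (hb : 0 ≤ b) {i j : ι} (hij : i ≠ j)
    (hLij : L i j ≠ 0) {C : K} (hC : L i i ≤ C * |L i j|) :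
    (L⁻¹ *ᵥ b) j ≤ C * (L⁻¹ *ᵥ b) i := by
  set x := L⁻¹ *ᵥ b with hx_def
  have hLx : L *ᵥ x = b := by
    rw [hx_def, mulVec_mulVec, mul_nonsing_inv L ((isUnit_iff_isUnit_det L).1 hInv), one_mulVec]
  have hx : 0 ≤ x := hL.nonneg_of_mulVec_nonneg_of_isUnit hInv hv hLv (hLx ▸ hb)
  refine le_of_mul_le_mul_left ?_ (abs_pos.2 hLij)
  calc |L i j| * x j
      = -L i j * x j := by rw [abs_of_nonpos (hL hij)]
    _ ≤ L i i * x i := hL.neg_mul_le_diag_mul hx (hLx ▸ hb i) hij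
    _ ≤ C * |L i j| * x i := mul_le_mul_of_nonneg_right hC (hx i)
    _ = |L i j| * (C * x i) := by ring

end

namespace IsRDDL

variable {n : ℕ} {L : Matrix (Fin n) (Fin n) ℝ}

theorem isZMatrix (hL : IsRDDL L) : IsZMatrix L := hL.2.1

theorem mulVec_one_nonneg (hL : IsRDDL L) : 0 ≤ L *ᵥ 1 := by
  intro i
  calc 0 ≤ L i i - ∑ k ∈ Finset.univ.erase i, |L i k| := sub_nonneg.2 (hL.2.2 i)
    _ = L i i + ∑ k ∈ Finset.univ.erase i, -|L i k| := by
      rw [Finset.sum_neg_distrib, sub_eq_add_neg]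
    _ ≤ L i i + ∑ k ∈ Finset.univ.erase i, L i k := by gcongr; exact neg_abs_le _
    _ = (L *ᵥ 1) i := by
      rw [Finset.add_sum_erase _ _ (Finset.mem_univ i), mulVec, dotProduct_one]

end IsRDDL

theorem entry_le_mul_abs_entry_of_int {m n R : Type*} [Ring R] [LinearOrder R]
    [IsStrictOrderedRing R] {L : Matrix m n R} {U : ℕ} {C : R}
    (hint : ∀ i j, ∃ z : ℤ, L i j = (z : R) ∧ |z| ≤ (U : ℤ)) (hUC : (U : R) ≤ C)
    (i k : m) (j : n) {l : n} (hkl : L k l ≠ 0) : L i j ≤ C * |L k l| := by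
  obtain ⟨z, hz, hzU⟩ := hint i j
  obtain ⟨w, hw, -⟩ := hint k l
  rw [hw, Int.cast_ne_zero] at hkl
  have hone : 1 ≤ |L k l| := by
    rw [hw]
    exact_mod_cast Int.one_le_abs hkl
  calc L i j ≤ U := by
        rw [hz]
        exact_mod_cast (le_abs_self z).trans hzU
    _ ≤ C := hUC
    _ ≤ C * |L k l| := le_mul_of_one_le_right (U.cast_nonneg.trans hUC) hone

/-- For an invertible SDDM matrix `L` with integer entries in `[-U, U]`, a nonnegative
vector `b`, and neighbouring indices `i ≠ j` (i.e. `L i j ≠ 0`), the entries of the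
solution `L⁻¹ b` at `i` and `j` are within a factor `n·U` of each other. -/
theorem solution_of_neighbors_single_system {n : ℕ} (U : ℕ) (hU : 1 ≤ U)
    (L : Matrix (Fin n) (Fin n) ℝ) (hL : IsRDDL L) (hSym : L.IsSymm) (hInv : IsUnit L)
    (hint : ∀ i j, ∃ z : ℤ, L i j = (z : ℝ) ∧ |z| ≤ (U : ℤ))
    (b : Fin n → ℝ) (hb : ∀ i, 0 ≤ b i)
    (i j : Fin n) (hij : i ≠ j) (hLij : L i j ≠ 0) :
    ((n : ℝ) * U)⁻¹ * (L⁻¹ *ᵥ b) j ≤ (L⁻¹ *ᵥ b) i ∧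
      (L⁻¹ *ᵥ b) i ≤ (n : ℝ) * U * (L⁻¹ *ᵥ b) j := by
  have hn : (1 : ℝ) ≤ n := mod_cast i.pos
  have hUn : (U : ℝ) ≤ n * U := le_mul_of_one_le_left U.cast_nonneg hn
  have hle {k l : Fin n} (hkl : k ≠ l) (hLkl : L k l ≠ 0) :
      (L⁻¹ *ᵥ b) l ≤ n * U * (L⁻¹ *ᵥ b) k :=
    solution_of_neighbors_single_system_general hL.isZMatrix hInv (fun _ => one_pos)
      hL.mulVec_one_nonneg hb hkl hLkl (entry_le_mul_abs_entry_of_int hint hUn k k k hLkl)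
  exact ⟨(inv_mul_le_iff₀ (by positivity)).2 (hle hij hLij), hle hij.symm (by rwa [hSym.apply])⟩
end

section
/- Let M ∈ ℝ^{n×n} be an invertible RDDL matrix with integer entries in [−U, U] for some integer U ≥ 1, and let i, j ∈ [n]. Suppose there is a sequence i = v₀, v₁, …, v_ℓ = j of indices with M_{v_l, v_{l+1}} ≠ 0 and v_l ≠ v_{l+1} for each 0 ≤ l < ℓ. Then, with A := I − diag(M)^{-1}M, one has ((I − A)^{-1})_{ij} ≥ U^{−ℓ}, and consequently (M^{-1})_{ij} ≥ U^{−(ℓ+1)}. -/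
open Matrix

/-!
Let `N = (1 - A)⁻¹`. Since `N = 1 + A * N` and `A` is entrywise nonnegative, once `N` is known to be
nonnegative, peeling off the first step of the walk gives `N i k ≥ A i j * N j k`; hence `N i j` is
at least the product of the entries of `A` along the walk, each of which is at least `1 / U`.

Nonnegativity of `N`, equivalently of `M⁻¹`, is a minimum principle. If `M x` is strictly positive
then so is `x`, by looking at the row of a smallest entry of `x`. With only weak diagonal dominance
this says nothing about `M x ≥ 0`, so we perturb `x` by a small multiple of `M⁻¹ 1`.
-/

variable {ι R 𝕜 : Type*} [Fintype ι]

/-- Row diagonally dominant Z-matrices: since the off-diagonal entries are nonpositive, weak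
dominance of the diagonal amounts to nonnegativity of the row sums. Over an ordered
field, the invertible ones are exactly the invertible RDDL matrices. -/
structure IsRowDominantZMatrix [AddCommMonoid R] [LE R] (M : Matrix ι ι R) : Prop where
  offDiag_nonpos : ∀ i j, i ≠ j → M i j ≤ 0
  row_sum_nonneg : ∀ i, 0 ≤ ∑ j, M i j

namespace IsRowDominantZMatrix

section OrderedRing

variable [Ring R] [LinearOrder R] [IsStrictOrderedRing R] {M : Matrix ι ι R}

theorem pos_of_mulVec_pos (hM : IsRowDominantZMatrix M) {x : ι → R}
    (hx : ∀ i, 0 < (M *ᵥ x) i) (i : ι) : 0 < x i := by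
  have : Nonempty ι := ⟨i⟩
  obtain ⟨p, hp⟩ := Finite.exists_min x
  suffices 0 < x p from this.trans_le (hp i)
  by_contra! hxp
  refine (hx p).not_ge ?_
  calc (M *ᵥ x) p = ∑ j, M p j * x j := rfl
    _ ≤ ∑ j, M p j * x p := Finset.sum_le_sum fun j _ ↦ by
        obtain rfl | hj := eq_or_ne p j
        · rfl
        · exact mul_le_mul_of_nonpos_left (hp j) (hM.offDiag_nonpos p j hj)
    _ = (∑ j, M p j) * x p := (Finset.sum_mul ..).symm
    _ ≤ 0 := mul_nonpos_of_nonneg_of_nonpos (hM.row_sum_nonneg p) hxp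

theorem mulVec_le_diag_mul (hM : IsRowDominantZMatrix M) {x : ι → R} (hx : ∀ i, 0 ≤ x i) (i : ι) :
    (M *ᵥ x) i ≤ M i i * x i := by
  classical
  have hoff : ∑ j ∈ Finset.univ.erase i, M i j * x j ≤ 0 := Finset.sum_nonpos fun j hj ↦
    mul_nonpos_of_nonpos_of_nonneg
      (hM.offDiag_nonpos i j (Finset.ne_of_mem_erase hj).symm) (hx j)
  calc (M *ᵥ x) i = M i i * x i + ∑ j ∈ Finset.univ.erase i, M i j * x j :=
        (Finset.add_sum_erase _ (fun j ↦ M i j * x j) (Finset.mem_univ i)).symm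
    _ ≤ M i i * x i := add_le_of_nonpos_right hoff

end OrderedRing

section OrderedField

variable [DecidableEq ι] [Field 𝕜] [LinearOrder 𝕜] [IsStrictOrderedRing 𝕜] {M : Matrix ι ι 𝕜}

theorem exists_pos_mulVec_eq_one (hM : IsRowDominantZMatrix M) (hunit : IsUnit M) :
    ∃ u : ι → 𝕜, (∀ i, 0 < u i) ∧ M *ᵥ u = 1 := by
  obtain ⟨u, hu⟩ := mulVec_surjective_iff_isUnit.2 hunit 1
  exact ⟨u, hM.pos_of_mulVec_pos fun i ↦ by simp [hu], hu⟩

theorem diag_pos (hM : IsRowDominantZMatrix M) (hunit : IsUnit M) (i : ι) : 0 < M i i := by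
  obtain ⟨u, hu_pos, hu⟩ := hM.exists_pos_mulVec_eq_one hunit
  have h : (1 : 𝕜) ≤ M i i * u i := by
    simpa [hu] using hM.mulVec_le_diag_mul (fun j ↦ (hu_pos j).le) i
  exact pos_of_mul_pos_left (zero_lt_one.trans_le h) (hu_pos i).le

theorem nonneg_of_mulVec_nonneg (hM : IsRowDominantZMatrix M) (hunit : IsUnit M) {x : ι → 𝕜}
    (hx : ∀ i, 0 ≤ (M *ᵥ x) i) (i : ι) : 0 ≤ x i := by
  obtain ⟨u, hu_pos, hu⟩ := hM.exists_pos_mulVec_eq_one hunit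
  have hperturb (ε : 𝕜) (hε : 0 < ε) : 0 < (x + ε • u) i :=
    hM.pos_of_mulVec_pos (fun k ↦ by
      simpa [mulVec_add, mulVec_smul, hu] using add_pos_of_nonneg_of_pos (hx k) hε) i
  refine le_of_forall_pos_lt_add fun ε hε ↦ ?_
  simpa [(hu_pos i).ne'] using hperturb (ε / u i) (div_pos hε (hu_pos i))

theorem inv_apply_nonneg (hM : IsRowDominantZMatrix M) (hunit : IsUnit M) (i j : ι) :
    0 ≤ M⁻¹ i j := by
  refine hM.nonneg_of_mulVec_nonneg hunit (x := M⁻¹.col j) (fun k ↦ ?_) i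
  have hcol : (M *ᵥ M⁻¹.col j) k = (1 : Matrix ι ι 𝕜) k j := by
    rw [← mul_nonsing_inv M ((isUnit_iff_isUnit_det M).1 hunit)]
    rfl
  rw [hcol]
  exact zero_le_one_elem k j

end OrderedField

end IsRowDominantZMatrix

theorem prod_walk_le_of_eq_one_add_mul [DecidableEq ι] [CommSemiring R] [PartialOrder R]
    [IsOrderedRing R] {A N : Matrix ι ι R} (hA : ∀ i j, 0 ≤ A i j) (hN : ∀ i j, 0 ≤ N i j)
    (h : N = 1 + A * N) {ℓ : ℕ} (v : Fin (ℓ + 1) → ι) :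
    ∏ l : Fin ℓ, A (v l.castSucc) (v l.succ) ≤ N (v 0) (v (Fin.last ℓ)) := by
  have h_apply (i j) : N i j = (1 : Matrix ι ι R) i j + ∑ k, A i k * N k j :=
    congr_fun₂ h i j
  have hAN (i k j) : 0 ≤ A i k * N k j := mul_nonneg (hA i k) (hN k j)
  have h_diag (j) : 1 ≤ N j j := by
    rw [h_apply, one_apply_eq]
    exact le_add_of_nonneg_right (Finset.sum_nonneg fun k _ ↦ hAN j k j)
  have h_step (i k j) : A i k * N k j ≤ N i j := by
    rw [h_apply i j]
    exact (Finset.single_le_sum (fun k _ ↦ hAN i k j) (Finset.mem_univ k)).trans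
      (le_add_of_nonneg_left (zero_le_one_elem i j))
  induction ℓ with
  | zero => simpa using h_diag (v 0)
  | succ ℓ ih =>
    rw [Fin.prod_univ_succ]
    exact (mul_le_mul_of_nonneg_left (ih (Fin.tail v)) (hA _ _)).trans (h_step _ _ _)

section Jacobi

variable [DecidableEq ι]

/-- The iteration matrix `A = 1 - diag(M)⁻¹ * M` of the Jacobi method for `M`. The diagonal is
inverted entrywise, so a row of `M` with zero diagonal entry gives the corresponding row of the
identity. -/
def jacobiIteration [Field 𝕜] (M : Matrix ι ι 𝕜) : Matrix ι ι 𝕜 :=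
  1 - diagonal (fun k ↦ (M k k)⁻¹) * M

section Field

variable [Field 𝕜] {M : Matrix ι ι 𝕜} {i j : ι}

theorem jacobiIteration_apply_self (hi : M i i ≠ 0) : jacobiIteration M i i = 0 := by
  simp [jacobiIteration, hi]

theorem jacobiIteration_apply_of_ne (hij : i ≠ j) :
    jacobiIteration M i j = (M i i)⁻¹ * -M i j := by
  simp [jacobiIteration, hij]

theorem one_sub_jacobiIteration (M : Matrix ι ι 𝕜) :
    1 - jacobiIteration M = diagonal (fun k ↦ (M k k)⁻¹) * M :=
  sub_sub_cancel _ _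

theorem one_sub_jacobiIteration_mul_inv_mul_diagonal (hunit : IsUnit M) (hdiag : ∀ i, M i i ≠ 0) :
    (1 - jacobiIteration M) * (M⁻¹ * diagonal fun k ↦ M k k) = 1 := by
  rw [one_sub_jacobiIteration, Matrix.mul_assoc,
    mul_nonsing_inv_cancel_left _ _ ((isUnit_iff_isUnit_det M).1 hunit), diagonal_mul_diagonal,
    ← diagonal_one]
  exact congr_arg diagonal (funext fun k ↦ inv_mul_cancel₀ (hdiag k))

theorem inv_one_sub_jacobiIteration_apply (hunit : IsUnit M) (hdiag : ∀ i, M i i ≠ 0) (i j : ι) :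
    (1 - jacobiIteration M)⁻¹ i j = M⁻¹ i j * M j j := by
  rw [inv_eq_right_inv (one_sub_jacobiIteration_mul_inv_mul_diagonal hunit hdiag), mul_diagonal]

theorem inv_one_sub_jacobiIteration_eq_one_add_mul (hunit : IsUnit M) (hdiag : ∀ i, M i i ≠ 0) :
    (1 - jacobiIteration M)⁻¹ = 1 + jacobiIteration M * (1 - jacobiIteration M)⁻¹ := by
  have h := one_sub_jacobiIteration_mul_inv_mul_diagonal hunit hdiag
  rwa [← inv_eq_right_inv h, Matrix.sub_mul, Matrix.one_mul, sub_eq_iff_eq_add] at h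

end Field

namespace IsRowDominantZMatrix

variable [Field 𝕜] [LinearOrder 𝕜] [IsStrictOrderedRing 𝕜] {M : Matrix ι ι 𝕜}

theorem jacobiIteration_nonneg (hM : IsRowDominantZMatrix M) (hunit : IsUnit M) (i j : ι) :
    0 ≤ jacobiIteration M i j := by
  obtain rfl | hij := eq_or_ne i j
  · exact (jacobiIteration_apply_self (hM.diag_pos hunit i).ne').ge
  · rw [jacobiIteration_apply_of_ne hij]
    exact mul_nonneg (inv_nonneg.2 (hM.diag_pos hunit i).le)
      (neg_nonneg.2 (hM.offDiag_nonpos i j hij))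

theorem prod_walk_le_inv_one_sub_jacobiIteration (hM : IsRowDominantZMatrix M) (hunit : IsUnit M)
    {ℓ : ℕ} (v : Fin (ℓ + 1) → ι) :
    ∏ l : Fin ℓ, jacobiIteration M (v l.castSucc) (v l.succ) ≤
      (1 - jacobiIteration M)⁻¹ (v 0) (v (Fin.last ℓ)) := by
  have hdiag (i) : 0 < M i i := hM.diag_pos hunit i
  refine prod_walk_le_of_eq_one_add_mul (hM.jacobiIteration_nonneg hunit) (fun i j ↦ ?_)
    (inv_one_sub_jacobiIteration_eq_one_add_mul hunit fun i ↦ (hdiag i).ne') v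
  rw [inv_one_sub_jacobiIteration_apply hunit fun i ↦ (hdiag i).ne']
  exact mul_nonneg (hM.inv_apply_nonneg hunit i j) (hdiag j).le

theorem inv_le_jacobiIteration (hM : IsRowDominantZMatrix M) (hunit : IsUnit M) {U : 𝕜} {i j : ι}
    (hU : M i i ≤ U) (hij : M i j ≤ -1) : U⁻¹ ≤ jacobiIteration M i j := by
  have hpos : 0 < M i i := hM.diag_pos hunit i
  have hne : i ≠ j := by
    rintro rfl
    linarith
  calc U⁻¹ ≤ (M i i)⁻¹ := inv_anti₀ hpos hU
    _ ≤ (M i i)⁻¹ * -M i j := le_mul_of_one_le_right (inv_pos.2 hpos).le (le_neg.1 hij)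
    _ = jacobiIteration M i j := (jacobiIteration_apply_of_ne hne).symm

end IsRowDominantZMatrix

theorem inverse_entry_lower_bound_of_walk_general [Field 𝕜] [LinearOrder 𝕜]
    [IsStrictOrderedRing 𝕜] {M : Matrix ι ι 𝕜} (hM : IsRowDominantZMatrix M) (hunit : IsUnit M)
    {U : 𝕜} {ℓ : ℕ} (v : Fin (ℓ + 1) → ι) (hdiag : ∀ l, M (v l) (v l) ≤ U)
    (hstep : ∀ l : Fin ℓ, M (v l.castSucc) (v l.succ) ≤ -1) :
    (U ^ ℓ)⁻¹ ≤ (1 - jacobiIteration M)⁻¹ (v 0) (v (Fin.last ℓ)) ∧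
      (U ^ (ℓ + 1))⁻¹ ≤ M⁻¹ (v 0) (v (Fin.last ℓ)) := by
  have hpos (i) : 0 < M i i := hM.diag_pos hunit i
  have hU : 0 < U := (hpos (v 0)).trans_le (hdiag 0)
  have hjacobi : (U ^ ℓ)⁻¹ ≤ (1 - jacobiIteration M)⁻¹ (v 0) (v (Fin.last ℓ)) :=
    calc (U ^ ℓ)⁻¹ = ∏ _l : Fin ℓ, U⁻¹ := by simp
      _ ≤ ∏ l : Fin ℓ, jacobiIteration M (v l.castSucc) (v l.succ) :=
        Finset.prod_le_prod (fun _ _ ↦ (inv_pos.2 hU).le) fun l _ ↦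
          hM.inv_le_jacobiIteration hunit (hdiag l.castSucc) (hstep l)
      _ ≤ _ := hM.prod_walk_le_inv_one_sub_jacobiIteration hunit v
  refine ⟨hjacobi, ?_⟩
  rw [inv_one_sub_jacobiIteration_apply hunit fun i ↦ (hpos i).ne'] at hjacobi
  rw [pow_succ, mul_inv, ← div_eq_mul_inv, div_le_iff₀ hU]
  exact hjacobi.trans
    (mul_le_mul_of_nonneg_left (hdiag (Fin.last ℓ)) (hM.inv_apply_nonneg hunit _ _))

end Jacobi

namespace IsRDDL

variable {n : ℕ} {M : Matrix (Fin n) (Fin n) ℝ}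

theorem isRowDominantZMatrix (hM : IsRDDL M) : IsRowDominantZMatrix M where
  offDiag_nonpos := hM.2.1
  row_sum_nonneg i := by
    have habs : ∑ j ∈ Finset.univ.erase i, |M i j| = -∑ j ∈ Finset.univ.erase i, M i j := by
      rw [← Finset.sum_neg_distrib]
      exact Finset.sum_congr rfl fun j hj ↦
        abs_of_nonpos (hM.2.1 i j (Finset.ne_of_mem_erase hj).symm)
    rw [← Finset.add_sum_erase _ _ (Finset.mem_univ i)]
    linarith [hM.2.2 i]

theorem le_neg_one_of_eq_intCast (hM : IsRDDL M) {i j : Fin n} (hij : i ≠ j) (hne : M i j ≠ 0)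
    {z : ℤ} (hz : M i j = z) : M i j ≤ -1 := by
  have hneg : M i j < 0 := (hM.2.1 i j hij).lt_of_ne hne
  rw [hz] at hneg ⊢
  exact_mod_cast Int.le_sub_one_of_lt (Int.cast_lt_zero.1 hneg)

end IsRDDL

/-- If there is a length-`ℓ` walk from `i` to `j` along nonzero off-diagonal entries of
an invertible RDDL matrix `M` with integer entries in `[-U, U]`, then, with
`A = I - diag(M)⁻¹·M`, one has `((I-A)⁻¹)ᵢⱼ ≥ U^{-ℓ}` and `(M⁻¹)ᵢⱼ ≥ U^{-(ℓ+1)}`. -/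
theorem inverse_entry_lower_bound_of_walk {n : ℕ} (U : ℕ) (hU : 1 ≤ U)
    (M : Matrix (Fin n) (Fin n) ℝ) (hM : IsRDDL M) (hInv : IsUnit M)
    (hint : ∀ i j, ∃ z : ℤ, M i j = (z : ℝ) ∧ |z| ≤ (U : ℤ))
    (i j : Fin n) (ℓ : ℕ) (v : Fin (ℓ + 1) → Fin n)
    (hv0 : v 0 = i) (hvlast : v (Fin.last ℓ) = j)
    (hstep : ∀ l : Fin ℓ, M (v l.castSucc) (v l.succ) ≠ 0 ∧ v l.castSucc ≠ v l.succ)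
    (A : Matrix (Fin n) (Fin n) ℝ)
    (hA : A = 1 - (Matrix.diagonal fun k => (M k k)⁻¹) * M) :
    ((U : ℝ) ^ ℓ)⁻¹ ≤ (1 - A)⁻¹ i j ∧ ((U : ℝ) ^ (ℓ + 1))⁻¹ ≤ M⁻¹ i j := by
  subst hv0 hvlast hA
  refine inverse_entry_lower_bound_of_walk_general hM.isRowDominantZMatrix hInv v
    (fun l ↦ ?_) (fun l ↦ ?_)
  · obtain ⟨z, hz, hzU⟩ := hint (v l) (v l)
    rw [hz]
    exact_mod_cast (le_abs_self z).trans hzU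
  · obtain ⟨z, hz, -⟩ := hint (v l.castSucc) (v l.succ)
    exact hM.le_neg_one_of_eq_intCast (hstep l).2 (hstep l).1 hz
end
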